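/- Let f ∈ C(𝕋), h > 0, and h₁ = h/(2√6). Then (1/3)·W₂*(f, χ_h²) ≤ (2/3)·K₂(f, h₁) ≤ (1/2)·ω₂(f, 2h₁) ≤ 2·K₂(f, h₁) ≤ 3·W₂*(f, χ_h²). -/

import Mathlib

/-!
Write `Δ_v² f (t) = f(t+v) - 2 f(t) + f(t-v)`. If `F'' = f`, two integrations by parts give
`Δ_u² F (t) - u² f(t) = ∫₀ᵘ (u - v) Δ_v² f (t) dv`, and since `χ_u²` is the triangular kernel,
`f * χ_u² = u⁻² Δ_u² F`. Every inequality in the chain is this identity plus a bound on `Δ_v² f`.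

* `W₂* ≤ 2 K₂` and `ω₂ ≤ 4 K₂`: split `f = (f - g) + g` and use `|Δ_v² g| ≤ v² ‖g''‖`. In the
  first case `∫₀ᵘ (u - v) v² dv = u⁴ / 12` produces the constant `h² / 12 = 2 h₁²`.
* `K₂ ≤ (3/4) ω₂`: take `g = f * χ_s²` with `s = 2 h₁`, for which `g'' = s⁻² Δ_s² f`.
* `K₂ ≤ (3/2) W₂*`: take `g` to be the average of `f * χ_u²` over `0 < u ≤ h` with respect to the
  probability density `12 h⁻⁴ u² (h - u)`. Then `‖f - g‖ ≤ W₂*`, and the density is chosen so that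
  `g'' = 12 h⁻⁴ ∫₀ʰ (h - u) Δ_u² f du = 12 h⁻² (f * χ_h² - f)`. In terms of iterated
  antiderivatives, `g = 12 h⁻⁴ (Δ_h² F₄ - h² F₂)` with `F₂'' = f` and `F₄'' = F₂`.
-/

open MeasureTheory Real

/-- Uniform (sup) norm of a real function. -/
noncomputable def unorm (f : ℝ → ℝ) : ℝ := ⨆ u : ℝ, |f u|

/-- Convolution of two real functions. -/
noncomputable def conv (f g : ℝ → ℝ) : ℝ → ℝ := fun t => ∫ u : ℝ, f u * g (t - u)

/-- Normalized characteristic function of `(-h/2, h/2)`. -/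
noncomputable def chi (h : ℝ) : ℝ → ℝ := fun t => if -h/2 < t ∧ t < h/2 then 1/h else 0

/-- Convolution powers `χ_h^k` (defined for `k ≥ 1`; junk value `0` at `k = 0`). -/
noncomputable def chiPow (h : ℝ) : ℕ → (ℝ → ℝ)
  | 0 => fun _ => 0
  | 1 => chi h
  | (k+2) => conv (chiPow h (k+1)) (chi h)

/-- Special modulus of continuity `W₂(f, χ_h^k) = ‖f - f*χ_h^k‖`. -/
noncomputable def W2 (f : ℝ → ℝ) (h : ℝ) (k : ℕ) : ℝ :=
  unorm (fun t => f t - conv f (chiPow h k) t)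

/-- `W₂*(f, χ_h^k) = sup_{0 < u ≤ h} W₂(f, χ_u^k)`. -/
noncomputable def W2star (f : ℝ → ℝ) (h : ℝ) (k : ℕ) : ℝ :=
  ⨆ u : Set.Ioc (0:ℝ) h, W2 f u.1 k

/-- Second Peetre K-functional: infimum over twice continuously differentiable
1-periodic functions `g` of `‖f - g‖ + h² ‖D²g‖`. -/
noncomputable def K2 (f : ℝ → ℝ) (h : ℝ) : ℝ :=
  ⨅ g : {g : ℝ → ℝ // ContDiff ℝ 2 g ∧ Function.Periodic g 1},
    unorm (fun t => f t - g.1 t) + h^2 * unorm (iteratedDeriv 2 g.1)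

/-- Generalized K-functional `K̃₂(f, h₁, h₂)`. -/
noncomputable def Ktilde2 (f : ℝ → ℝ) (h1 h2 : ℝ) : ℝ :=
  ⨅ p : {p : (ℝ → ℝ) × (ℝ → ℝ) //
      (ContDiff ℝ 1 p.1 ∧ Function.Periodic p.1 1) ∧
      (ContDiff ℝ 2 p.2 ∧ Function.Periodic p.2 1)},
    unorm (fun t => f t - p.1.1 t) + h1 * unorm (deriv (fun t => p.1.1 t - p.1.2 t))
      + h2^2 * unorm (iteratedDeriv 2 p.1.2)

/-- Classical second modulus of smoothness. -/
noncomputable def omega2 (f : ℝ → ℝ) (h : ℝ) : ℝ :=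
  ⨆ u : Set.Ioc (0:ℝ) h, ⨆ t : ℝ, |f (t + u.1) - 2 * f t + f (t - u.1)|

/-- `τ` is a real 1-periodic trigonometric polynomial of degree at most `n - 1`. -/
def IsTrigPolyDegLT (n : ℕ) (τ : ℝ → ℝ) : Prop :=
  ∃ a b : ℕ → ℝ, ∀ t : ℝ, τ t =
    ∑ j ∈ Finset.range n, (a j * Real.cos (2 * Real.pi * j * t) + b j * Real.sin (2 * Real.pi * j * t))

/-- Best approximation `E_{n-1}(f)` by trigonometric polynomials of degree at most `n-1`. -/
noncomputable def bestApprox (n : ℕ) (f : ℝ → ℝ) : ℝ :=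
  ⨅ τ : {τ : ℝ → ℝ // IsTrigPolyDegLT n τ}, unorm (fun t => f t - τ.1 t)

/-! ### Second differences and Taylor's formula -/

/-- The symmetric second difference `Δ_u² f (t)`. -/
noncomputable def sd (f : ℝ → ℝ) (t u : ℝ) : ℝ := f (t + u) - 2 * f t + f (t - u)

/-- The antiderivative of `f` vanishing at `0`. -/
noncomputable def prim (f : ℝ → ℝ) : ℝ → ℝ := fun x => ∫ s in (0:ℝ)..x, f s

lemma prim_hasDerivAt {f : ℝ → ℝ} (hf : Continuous f) (x : ℝ) : HasDerivAt (prim f) (f x) x :=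
  (hf.integral_hasStrictDerivAt 0 x).hasDerivAt

lemma prim_continuous {f : ℝ → ℝ} (hf : Continuous f) : Continuous (prim f) :=
  continuous_iff_continuousAt.2 fun x => (prim_hasDerivAt hf x).continuousAt

lemma sd_continuous {f : ℝ → ℝ} (hf : Continuous f) (t : ℝ) : Continuous (sd f t) := by
  unfold sd; fun_prop

/-- Taylor's formula for `F` with `F'' = f`, summed over the two directions `±u`. -/
lemma rep0 {F F' f : ℝ → ℝ} (hF : ∀ x, HasDerivAt F (F' x) x) (hF' : ∀ x, HasDerivAt F' (f x) x)
    (hf : Continuous f) (t u : ℝ) :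
    ∫ v in (0:ℝ)..u, (u - v) * (f (t + v) + f (t - v)) = sd F t u := by
  have key : ∀ v ∈ Set.uIcc 0 u, HasDerivAt
      (fun v => (u - v) * (F' (t + v) - F' (t - v)) + (F (t + v) + F (t - v)))
      ((u - v) * (f (t + v) + f (t - v))) v := by
    intro v _
    have h1 : HasDerivAt (fun v => t + v) 1 v := (hasDerivAt_id v).const_add t
    have h2 : HasDerivAt (fun v => t - v) (-1) v := (hasDerivAt_id v).const_sub t
    have h3 : HasDerivAt (fun v => u - v) (-1) v := (hasDerivAt_id v).const_sub u
    have a1 := (hF' (t + v)).comp v h1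
    have a2 := (hF' (t - v)).comp v h2
    have b1 := (hF (t + v)).comp v h1
    have b2 := (hF (t - v)).comp v h2
    refine ((h3.mul (a1.sub a2)).add (b1.add b2)).congr_deriv ?_
    simp only [Function.comp, Pi.sub_apply]
    ring
  rw [intervalIntegral.integral_eq_sub_of_hasDerivAt key
    (by apply Continuous.intervalIntegrable; fun_prop)]
  unfold sd
  simp
  ring

lemma integral_weight (u : ℝ) : ∫ v in (0:ℝ)..u, (u - v) = u ^ 2 / 2 := by
  rw [intervalIntegral.integral_sub (by simp) (by simp)]
  simp
  ring

lemma integral_weight_sq (u : ℝ) : ∫ v in (0:ℝ)..u, (u - v) * v ^ 2 = u ^ 4 / 12 := by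
  have : ∀ v : ℝ, (u - v) * v ^ 2 = u * v ^ 2 - v ^ 3 := fun v => by ring
  simp_rw [this]
  rw [intervalIntegral.integral_sub (by apply Continuous.intervalIntegrable; fun_prop)
    (by apply Continuous.intervalIntegrable; fun_prop)]
  simp [integral_pow]
  ring

lemma rep {F F' f : ℝ → ℝ} (hF : ∀ x, HasDerivAt F (F' x) x) (hF' : ∀ x, HasDerivAt F' (f x) x)
    (hf : Continuous f) (t u : ℝ) :
    ∫ v in (0:ℝ)..u, (u - v) * sd f t v = sd F t u - u ^ 2 * f t := by
  have : ∀ v : ℝ, (u - v) * sd f t v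
      = (u - v) * (f (t + v) + f (t - v)) - (u - v) * (2 * f t) := fun v => by unfold sd; ring
  simp_rw [this]
  rw [intervalIntegral.integral_sub (by apply Continuous.intervalIntegrable; fun_prop)
    (by apply Continuous.intervalIntegrable; fun_prop), rep0 hF hF' hf,
    intervalIntegral.integral_mul_const, integral_weight]
  ring

lemma bound_weight {φ : ℝ → ℝ} (C u : ℝ) (hu : 0 < u)
    (h : ∀ v, 0 < v → v ≤ u → |φ v| ≤ C) :
    |∫ v in (0:ℝ)..u, (u - v) * φ v| ≤ C * (u ^ 2 / 2) := by
  rw [← integral_weight, ← intervalIntegral.integral_const_mul, ← Real.norm_eq_abs]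
  refine intervalIntegral.norm_integral_le_of_norm_le hu.le (Filter.Eventually.of_forall ?_)
    (by apply Continuous.intervalIntegrable; fun_prop)
  rintro v ⟨h0, h1⟩
  rw [Real.norm_eq_abs, abs_mul, abs_of_nonneg (sub_nonneg.2 h1), mul_comm]
  exact mul_le_mul_of_nonneg_right (h v h0 h1) (sub_nonneg.2 h1)

lemma bound_weight_sq {φ : ℝ → ℝ} (C u : ℝ) (hu : 0 < u)
    (h : ∀ v, 0 < v → v ≤ u → |φ v| ≤ C * v ^ 2) :
    |∫ v in (0:ℝ)..u, (u - v) * φ v| ≤ C * (u ^ 4 / 12) := by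
  rw [← integral_weight_sq, ← intervalIntegral.integral_const_mul, ← Real.norm_eq_abs]
  refine intervalIntegral.norm_integral_le_of_norm_le hu.le (Filter.Eventually.of_forall ?_)
    (by apply Continuous.intervalIntegrable; fun_prop)
  rintro v ⟨h0, h1⟩
  rw [Real.norm_eq_abs, abs_mul, abs_of_nonneg (sub_nonneg.2 h1)]
  calc (u - v) * |φ v| ≤ (u - v) * (C * v ^ 2) :=
        mul_le_mul_of_nonneg_left (h v h0 h1) (sub_nonneg.2 h1)
    _ = _ := by ring

/-! ### The kernel `χ_u²` -/

/-- `χ_u²` is the triangular kernel on `[-u, u]`. -/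
lemma chiPow_two (u : ℝ) (x : ℝ) :
    chiPow u 2 x = max 0 (u - |x|) / u ^ 2 := by
  change (∫ y, chi u y * chi u (x - y)) = _
  have e : (fun y => chi u y * chi u (x - y)) =
      (Set.Ioo (max (-u/2) (x - u/2)) (min (u/2) (x + u/2))).indicator
        (fun _ => 1 / u ^ 2) := by
    funext y
    unfold chi
    simp only [Set.indicator_apply, Set.mem_Ioo, max_lt_iff, lt_min_iff]
    by_cases h1 : -u/2 < y ∧ y < u/2
    · by_cases h2 : -u/2 < x - y ∧ x - y < u/2
      · rw [if_pos h1, if_pos h2, if_pos]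
        · ring
        · exact ⟨⟨h1.1, by linarith [h2.2]⟩, h1.2, by linarith [h2.1]⟩
      · rw [if_neg h2, mul_zero, if_neg]
        rintro ⟨⟨_, b⟩, _, d⟩
        exact h2 ⟨by linarith, by linarith⟩
    · rw [if_neg h1, zero_mul, if_neg]
      rintro ⟨⟨a, _⟩, c, _⟩
      exact h1 ⟨a, c⟩
  rw [e, integral_indicator measurableSet_Ioo, setIntegral_const, Measure.real, Real.volume_Ioo,
    ENNReal.toReal_ofReal', smul_eq_mul, mul_one_div]
  congr 1
  rw [max_comm 0]
  congr 1
  rcases le_total 0 x with h | h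
  · rw [abs_of_nonneg h, max_eq_right (by linarith), min_eq_left (by linarith)]; ring
  · rw [abs_of_nonpos h, max_eq_left (by linarith), min_eq_right (by linarith)]; ring

/-- `f * χ_u²` is the normalized second difference of a second antiderivative of `f`. -/
lemma conv_eq {f : ℝ → ℝ} (hf : Continuous f) (u : ℝ) (hu : 0 < u) (t : ℝ) :
    conv f (chiPow u 2) t = sd (prim (prim f)) t u / u ^ 2 := by
  unfold conv
  simp_rw [chiPow_two u]
  have hc : Continuous fun s => f s * (max 0 (u - |t - s|) / u ^ 2) := by fun_prop
  have e : ∫ s, f s * (max 0 (u - |t - s|) / u ^ 2)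
      = ∫ s in (t - u)..(t + u), f s * (max 0 (u - |t - s|) / u ^ 2) := by
    rw [intervalIntegral.integral_of_le (by linarith)]
    refine (setIntegral_eq_integral_of_forall_compl_eq_zero fun s hs => ?_).symm
    have : u ≤ |t - s| := by
      by_contra! hlt
      rw [abs_lt] at hlt
      exact hs ⟨by linarith [hlt.2], by linarith [hlt.1]⟩
    rw [max_eq_left (by linarith)]
    simp
  rw [e, ← rep0 (prim_hasDerivAt (prim_continuous hf)) (prim_hasDerivAt hf) hf t u,
    ← intervalIntegral.integral_add_adjacent_intervals (b := t) (hc.intervalIntegrable _ _)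
      (hc.intervalIntegrable _ _)]
  have e1 : ∫ s in (t - u)..t, f s * (max 0 (u - |t - s|) / u ^ 2)
      = ∫ v in (0:ℝ)..u, f (t - v) * (max 0 (u - |v|) / u ^ 2) := by
    have := intervalIntegral.integral_comp_sub_left (a := 0) (b := u)
      (fun s => f s * (max 0 (u - |t - s|) / u ^ 2)) t
    simpa using this.symm
  have e2 : ∫ s in t..(t + u), f s * (max 0 (u - |t - s|) / u ^ 2)
      = ∫ v in (0:ℝ)..u, f (t + v) * (max 0 (u - |v|) / u ^ 2) := by
    have := intervalIntegral.integral_comp_add_left (a := 0) (b := u)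
      (fun s => f s * (max 0 (u - |t - s|) / u ^ 2)) t
    simpa using this.symm
  rw [e1, e2, ← intervalIntegral.integral_add (by apply Continuous.intervalIntegrable; fun_prop)
    (by apply Continuous.intervalIntegrable; fun_prop), ← intervalIntegral.integral_div]
  refine intervalIntegral.integral_congr fun v hv => ?_
  rw [Set.uIcc_of_le hu.le] at hv
  rw [abs_of_nonneg hv.1, max_eq_right (by linarith [hv.2])]
  ring

/-! ### Sup norms and moduli -/

lemma periodic_bounded {f : ℝ → ℝ} (hf : Continuous f) (hp : Function.Periodic f 1) :
    ∃ M, ∀ x, |f x| ≤ M := by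
  obtain ⟨M, hM⟩ := (hp.compact_of_continuous one_ne_zero hf).isBounded.exists_norm_le
  exact ⟨M, fun x => hM _ ⟨x, rfl⟩⟩

lemma unorm_le {f : ℝ → ℝ} {M : ℝ} (h : ∀ x, |f x| ≤ M) : unorm f ≤ M := ciSup_le h

lemma le_unorm {f : ℝ → ℝ} {M : ℝ} (h : ∀ x, |f x| ≤ M) (x : ℝ) : |f x| ≤ unorm f :=
  le_ciSup (f := fun u => |f u|) ⟨M, by rintro _ ⟨y, rfl⟩; exact h y⟩ x

lemma unorm_nonneg (f : ℝ → ℝ) : 0 ≤ unorm f := Real.iSup_nonneg fun _ => abs_nonneg _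

lemma sd_bound {f : ℝ → ℝ} {M : ℝ} (h : ∀ x, |f x| ≤ M) (t u : ℝ) : |sd f t u| ≤ 4 * M := by
  have h1 := abs_le.1 (h t)
  have h2 := abs_le.1 (h (t + u))
  have h3 := abs_le.1 (h (t - u))
  unfold sd
  rw [abs_le]
  constructor <;> linarith

/-- A bound for `Δ_v² f` on `(0, u]` gives half that bound for `f - f * χ_u²`. -/
lemma conv_bound {f : ℝ → ℝ} (hf : Continuous f) {u C : ℝ} (hu : 0 < u) (t : ℝ)
    (h : ∀ v, 0 < v → v ≤ u → |sd f t v| ≤ C) :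
    |f t - conv f (chiPow u 2) t| ≤ C / 2 := by
  have := bound_weight C u hu h
  rw [rep (prim_hasDerivAt (prim_continuous hf)) (prim_hasDerivAt hf) hf] at this
  rw [conv_eq hf u hu]
  have e : f t - sd (prim (prim f)) t u / u ^ 2
      = -((sd (prim (prim f)) t u - u ^ 2 * f t) / u ^ 2) := by field_simp; ring
  rw [e, abs_neg, abs_div, abs_of_pos (by positivity : 0 < u ^ 2), div_le_iff₀ (by positivity)]
  linarith

lemma le_W2star {f : ℝ → ℝ} (hf : Continuous f) {M : ℝ} (hM : ∀ x, |f x| ≤ M) {h u : ℝ}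
    (hu : 0 < u) (huh : u ≤ h) (t : ℝ) :
    |f t - conv f (chiPow u 2) t| ≤ W2star f h 2 := by
  have hb : ∀ v, 0 < v → ∀ t, |f t - conv f (chiPow v 2) t| ≤ 4 * M / 2 :=
    fun v hv t => conv_bound hf hv t fun w _ _ => sd_bound hM t w
  refine (le_unorm (hb u hu) t).trans ?_
  refine le_ciSup (f := fun u : Set.Ioc (0:ℝ) h => W2 f u.1 2) ⟨4 * M / 2, ?_⟩ ⟨u, hu, huh⟩
  rintro _ ⟨v, rfl⟩
  exact unorm_le (hb v.1 v.2.1)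

lemma le_omega2 {f : ℝ → ℝ} {M : ℝ} (hM : ∀ x, |f x| ≤ M) {h u : ℝ}
    (hu : 0 < u) (huh : u ≤ h) (t : ℝ) : |sd f t u| ≤ omega2 f h := by
  refine (le_unorm (f := fun t => sd f t u) (fun t => sd_bound hM t u) t).trans ?_
  refine le_ciSup (f := fun u : Set.Ioc (0:ℝ) h => unorm fun t => sd f t u.1)
    ⟨4 * M, ?_⟩ ⟨u, hu, huh⟩
  rintro _ ⟨v, rfl⟩
  exact unorm_le fun t => sd_bound hM t v.1

/-! ### `C²` functions -/

lemma C2_of_hasDerivAt {g g' g'' : ℝ → ℝ} (h1 : ∀ x, HasDerivAt g (g' x) x)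
    (h2 : ∀ x, HasDerivAt g' (g'' x) x) (hc : Continuous g'') :
    ContDiff ℝ 2 g ∧ iteratedDeriv 2 g = g'' := by
  have d1 : deriv g = g' := funext fun x => (h1 x).deriv
  have d2 : deriv g' = g'' := funext fun x => (h2 x).deriv
  constructor
  · rw [show (2 : WithTop ℕ∞) = 1 + 1 by norm_num, contDiff_succ_iff_deriv]
    refine ⟨fun x => (h1 x).differentiableAt, by simp, ?_⟩
    rw [d1, contDiff_one_iff_deriv, d2]
    exact ⟨fun x => (h2 x).differentiableAt, hc⟩
  · rw [iteratedDeriv_succ, iteratedDeriv_one, d1, d2]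

lemma C2_data {g : ℝ → ℝ} (hg : ContDiff ℝ 2 g) (hp : Function.Periodic g 1) :
    ∃ g' : ℝ → ℝ, (∀ x, HasDerivAt g (g' x) x) ∧
      (∀ x, HasDerivAt g' (iteratedDeriv 2 g x) x) ∧ Continuous (iteratedDeriv 2 g) ∧
      ∀ x, |iteratedDeriv 2 g x| ≤ unorm (iteratedDeriv 2 g) := by
  have hc : Continuous (iteratedDeriv 2 g) := hg.continuous_iteratedDeriv 2 le_rfl
  have hpp : Function.Periodic (iteratedDeriv 2 g) 1 := by
    intro x
    have h := congrFun (iteratedDeriv_comp_add_const 2 g 1) x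
    rw [← h]
    congr 1
    exact funext hp
  obtain ⟨M, hM⟩ := periodic_bounded hc hpp
  refine ⟨deriv g, fun x => (hg.differentiable (by norm_num) x).hasDerivAt, fun x => ?_, hc,
    le_unorm hM⟩
  rw [iteratedDeriv_succ, iteratedDeriv_one]
  rw [show (2 : WithTop ℕ∞) = 1 + 1 by norm_num, contDiff_succ_iff_deriv] at hg
  exact (hg.2.2.differentiable (by norm_num) x).hasDerivAt

lemma sd_bound_C2 {g g' g'' : ℝ → ℝ} {C : ℝ} (h1 : ∀ x, HasDerivAt g (g' x) x)
    (h2 : ∀ x, HasDerivAt g' (g'' x) x) (hc : Continuous g'') (hC : ∀ x, |g'' x| ≤ C)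
    (t u : ℝ) (hu : 0 < u) : |sd g t u| ≤ C * u ^ 2 := by
  rw [← rep0 h1 h2 hc]
  refine (bound_weight (2 * C) u hu fun v _ _ => ?_).trans (by linarith)
  exact (abs_add_le _ _).trans (by linarith [hC (t + v), hC (t - v)])

lemma conv_bound_C2 {g g' g'' : ℝ → ℝ} {C : ℝ} (h1 : ∀ x, HasDerivAt g (g' x) x)
    (h2 : ∀ x, HasDerivAt g' (g'' x) x) (hc : Continuous g'') (hC : ∀ x, |g'' x| ≤ C)
    (t u : ℝ) (hu : 0 < u) : |g t - conv g (chiPow u 2) t| ≤ C * u ^ 2 / 12 := by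
  have hg : Continuous g := continuous_iff_continuousAt.2 fun x => (h1 x).continuousAt
  have := bound_weight_sq C u hu fun v hv _ => sd_bound_C2 h1 h2 hc hC t v hv
  rw [rep (prim_hasDerivAt (prim_continuous hg)) (prim_hasDerivAt hg) hg] at this
  rw [conv_eq hg u hu]
  have e : g t - sd (prim (prim g)) t u / u ^ 2
      = -((sd (prim (prim g)) t u - u ^ 2 * g t) / u ^ 2) := by field_simp; ring
  rw [e, abs_neg, abs_div, abs_of_pos (by positivity : 0 < u ^ 2), div_le_iff₀ (by positivity)]
  linarith

lemma sd_hasDerivAt {F F' : ℝ → ℝ} (hF : ∀ x, HasDerivAt F (F' x) x) (u x : ℝ) :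
    HasDerivAt (fun t => sd F t u) (sd F' x u) x := by
  have h1 : HasDerivAt (fun v => v + u) 1 x := (hasDerivAt_id x).add_const u
  have h2 : HasDerivAt (fun v => v - u) 1 x := (hasDerivAt_id x).sub_const u
  have a1 := (hF (x + u)).comp x h1
  have a2 := (hF (x - u)).comp x h2
  refine ((a1.sub ((hF x).const_mul 2)).add a2).congr_deriv ?_
  unfold sd
  ring

lemma sd_periodic {f : ℝ → ℝ} (hp : Function.Periodic f 1) (u : ℝ) :
    Function.Periodic (fun t => sd f t u) 1 := by
  intro t
  simp only [sd]
  rw [show t + 1 + u = t + u + 1 by ring, show t + 1 - u = t - u + 1 by ring, hp, hp, hp]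

/-- The second antiderivative `prim (prim f)` of a periodic `f` need not be periodic, but its second
differences are. -/
lemma sd_prim_periodic {f : ℝ → ℝ} (hf : Continuous f) (hp : Function.Periodic f 1) (u : ℝ) :
    Function.Periodic (fun t => sd (prim (prim f)) t u) 1 := by
  intro t
  have r := fun t => rep (prim_hasDerivAt (prim_continuous hf)) (prim_hasDerivAt hf) hf t u
  have h1 := r t
  have h2 := r (t + 1)
  have : ∀ v, sd f (t + 1) v = sd f t v := fun v => sd_periodic hp v t
  simp_rw [this] at h2
  rw [h1, hp] at h2
  simp only
  linarith

/-! ### The four inequalities -/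

lemma K2_le {f g : ℝ → ℝ} (h : ℝ) (hg : ContDiff ℝ 2 g) (hp : Function.Periodic g 1) :
    K2 f h ≤ unorm (fun t => f t - g t) + h ^ 2 * unorm (iteratedDeriv 2 g) := by
  refine ciInf_le (f := fun g : {g : ℝ → ℝ // ContDiff ℝ 2 g ∧ Function.Periodic g 1} =>
    unorm (fun t => f t - g.1 t) + h^2 * unorm (iteratedDeriv 2 g.1)) ⟨0, ?_⟩ ⟨g, hg, hp⟩
  rintro _ ⟨g, rfl⟩
  exact add_nonneg (unorm_nonneg _) (mul_nonneg (sq_nonneg _) (unorm_nonneg _))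

lemma le_K2 {f : ℝ → ℝ} (h c : ℝ)
    (H : ∀ g : ℝ → ℝ, ContDiff ℝ 2 g → Function.Periodic g 1 →
      c ≤ unorm (fun t => f t - g t) + h ^ 2 * unorm (iteratedDeriv 2 g)) : c ≤ K2 f h := by
  have : Nonempty {g : ℝ → ℝ // ContDiff ℝ 2 g ∧ Function.Periodic g 1} :=
    ⟨⟨fun _ => 0, contDiff_const, fun _ => rfl⟩⟩
  exact le_ciInf fun g => H g.1 g.2.1 g.2.2

lemma omega2_le_K2 {f : ℝ → ℝ} (hf : Continuous f) (hper : Function.Periodic f 1)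
    (s : ℝ) (hs : 0 < s) : omega2 f (2 * s) ≤ 4 * K2 f s := by
  rw [← div_le_iff₀' (by norm_num)]
  refine le_K2 _ _ fun g hg hp => ?_
  obtain ⟨g', h1, h2, hc, hC⟩ := C2_data hg hp
  obtain ⟨M, hM⟩ := periodic_bounded (hf.sub hg.continuous) (hper.sub hp)
  rw [div_le_iff₀' (by norm_num)]
  have : Nonempty (Set.Ioc (0:ℝ) (2 * s)) := ⟨⟨2 * s, by positivity, le_rfl⟩⟩
  refine ciSup_le fun u => ciSup_le fun t => ?_
  have a := sd_bound_C2 h1 h2 hc hC t u.1 u.2.1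
  have b := sd_bound (f := fun t => f t - g t) (le_unorm hM) t u.1
  have e : f (t + u.1) - 2 * f t + f (t - u.1)
      = sd (fun t => f t - g t) t u.1 + sd g t u.1 := by unfold sd; ring
  rw [e]
  refine (abs_add_le _ _).trans ((add_le_add b a).trans ?_)
  have h3 : u.1 ^ 2 ≤ (2 * s) ^ 2 := pow_le_pow_left₀ u.2.1.le u.2.2 2
  nlinarith [unorm_nonneg (iteratedDeriv 2 g)]

lemma W2star_le_K2 {f : ℝ → ℝ} (hf : Continuous f) (hper : Function.Periodic f 1)
    (h s : ℝ) (hh : 0 < h) (hs : s ^ 2 = h ^ 2 / 24) : W2star f h 2 ≤ 2 * K2 f s := by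
  rw [← div_le_iff₀' (by norm_num)]
  refine le_K2 _ _ fun g hg hp => ?_
  obtain ⟨g', h1, h2, hc, hC⟩ := C2_data hg hp
  obtain ⟨M, hM⟩ := periodic_bounded (hf.sub hg.continuous) (hper.sub hp)
  rw [div_le_iff₀' (by norm_num), hs]
  have : Nonempty (Set.Ioc (0:ℝ) h) := ⟨⟨h, hh, le_rfl⟩⟩
  refine ciSup_le fun u => unorm_le fun t => ?_
  have hu : 0 < u.1 := u.2.1
  have hfg : Continuous fun t => f t - g t := hf.sub hg.continuous
  have a := conv_bound_C2 h1 h2 hc hC t u.1 hu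
  have b := conv_bound hfg hu t fun v _ _ => sd_bound (f := fun t => f t - g t) (le_unorm hM) t v
  have e : conv f (chiPow u.1 2) t
      = conv (fun t => f t - g t) (chiPow u.1 2) t + conv g (chiPow u.1 2) t := by
    -- `u² (f * χ_u²)(t)` is an integral over `[0, u]` that is visibly linear in `f`.
    have r := rep0 (prim_hasDerivAt (prim_continuous hf)) (prim_hasDerivAt hf) hf t u.1
    have r1 := rep0 (prim_hasDerivAt (prim_continuous hg.continuous))
      (prim_hasDerivAt hg.continuous) hg.continuous t u.1
    have r2 := rep0 (prim_hasDerivAt (prim_continuous hfg)) (prim_hasDerivAt hfg) hfg t u.1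
    have hgc := hg.continuous
    rw [conv_eq hf _ hu, conv_eq hfg _ hu, conv_eq hgc _ hu, ← r, ← r1, ← r2, ← add_div,
      ← intervalIntegral.integral_add (by apply Continuous.intervalIntegrable; fun_prop)
        (by apply Continuous.intervalIntegrable; fun_prop)]
    congr 1
    refine intervalIntegral.integral_congr fun v _ => ?_
    ring
  rw [e, show ∀ x y : ℝ, f t - (x + y) = (f t - g t - x) + (g t - y) by intros; ring]
  refine (abs_add_le _ _).trans ((add_le_add b a).trans ?_)
  have h3 : u.1 ^ 2 ≤ h ^ 2 := pow_le_pow_left₀ u.2.1.le u.2.2 2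
  nlinarith [unorm_nonneg (iteratedDeriv 2 g)]

lemma K2_le_omega2 {f : ℝ → ℝ} (hf : Continuous f) (hper : Function.Periodic f 1)
    (s : ℝ) (hs : 0 < s) : K2 f s ≤ 3 / 4 * omega2 f (2 * s) := by
  obtain ⟨M, hM⟩ := periodic_bounded hf hper
  have hu : 0 < 2 * s := by positivity
  obtain ⟨hg, hd⟩ := C2_of_hasDerivAt (g := fun t => sd (prim (prim f)) t (2 * s) / (2 * s) ^ 2)
    (fun x => (sd_hasDerivAt (prim_hasDerivAt (prim_continuous hf)) (2 * s) x).div_const _)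
    (fun x => (sd_hasDerivAt (prim_hasDerivAt hf) (2 * s) x).div_const _)
    (by unfold sd; fun_prop)
  refine (K2_le s hg fun t => ?_).trans ?_
  · simpa using congrArg (· / (2 * s) ^ 2) (sd_prim_periodic hf hper (2 * s) t)
  have a : unorm (fun t => f t - sd (prim (prim f)) t (2 * s) / (2 * s) ^ 2)
      ≤ omega2 f (2 * s) / 2 := by
    refine unorm_le fun t => ?_
    rw [← conv_eq hf _ hu]
    exact conv_bound hf hu t fun v h0 h1 => le_omega2 hM h0 h1 t
  have b : unorm (fun t => sd f t (2 * s) / (2 * s) ^ 2) ≤ omega2 f (2 * s) / (2 * s) ^ 2 := by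
    refine unorm_le fun t => ?_
    rw [abs_div, abs_of_pos (by positivity : 0 < (2 * s) ^ 2)]
    exact div_le_div_of_nonneg_right (le_omega2 hM hu le_rfl t) (by positivity)
  rw [hd]
  have c := mul_le_mul_of_nonneg_left b (sq_nonneg s)
  have e : s ^ 2 * (omega2 f (2 * s) / (2 * s) ^ 2) = omega2 f (2 * s) / 4 := by
    field_simp
    ring
  linarith

lemma K2_le_W2star {f : ℝ → ℝ} (hf : Continuous f) (hper : Function.Periodic f 1)
    (h s : ℝ) (hh : 0 < h) (hs : s ^ 2 = h ^ 2 / 24) : K2 f s ≤ 3 / 2 * W2star f h 2 := by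
  obtain ⟨M, hM⟩ := periodic_bounded hf hper
  set W := W2star f h 2 with hW
  have c1 := prim_continuous hf
  have c2 := prim_continuous c1
  have c3 := prim_continuous c2
  set F := prim (prim f) with hF
  have dF : ∀ x, HasDerivAt F (prim f x) x := prim_hasDerivAt c1
  have r := fun t => rep (prim_hasDerivAt c3) (prim_hasDerivAt c2) c2 t h
  obtain ⟨hg, hd⟩ := C2_of_hasDerivAt
    (g := fun t => (sd (prim (prim F)) t h - h ^ 2 * F t) * (12 / h ^ 4))
    (fun x => ((sd_hasDerivAt (prim_hasDerivAt c3) h x).sub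
      ((dF x).const_mul (h ^ 2))).mul_const _)
    (fun x => ((sd_hasDerivAt (prim_hasDerivAt c2) h x).sub
      ((prim_hasDerivAt hf x).const_mul (h ^ 2))).mul_const _)
    (by unfold sd; fun_prop)
  refine (K2_le s hg fun t => ?_).trans ?_
  · have : ∀ v, sd F (t + 1) v = sd F t v := fun v => sd_prim_periodic hf hper v t
    rw [← r, ← r]
    simp_rw [this]
  have hbd : ∀ t v, 0 < v → v ≤ h → |sd F t v - v ^ 2 * f t| ≤ W * v ^ 2 := by
    intro t v h0 h1
    have := le_W2star hf hM h0 h1 t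
    rw [conv_eq hf v h0, abs_sub_comm] at this
    have e : sd F t v - v ^ 2 * f t = (sd F t v / v ^ 2 - f t) * v ^ 2 := by
      field_simp
    rw [e, abs_mul, abs_of_pos (by positivity : 0 < v ^ 2)]
    exact mul_le_mul_of_nonneg_right this (by positivity)
  have a : unorm (fun t => f t - (sd (prim (prim F)) t h - h ^ 2 * F t) * (12 / h ^ 4)) ≤ W := by
    refine unorm_le fun t => ?_
    have hb := bound_weight_sq W h hh (hbd t)
    have e : ∫ v in (0:ℝ)..h, (h - v) * (sd F t v - v ^ 2 * f t)
        = sd (prim (prim F)) t h - h ^ 2 * F t - h ^ 4 / 12 * f t := by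
      have e' : ∀ v : ℝ, (h - v) * (sd F t v - v ^ 2 * f t)
          = (h - v) * sd F t v - (h - v) * v ^ 2 * f t := fun v => by ring
      have := sd_continuous c2 t
      simp_rw [e']
      rw [intervalIntegral.integral_sub (by apply Continuous.intervalIntegrable; fun_prop)
        (by apply Continuous.intervalIntegrable; fun_prop), r,
        intervalIntegral.integral_mul_const, integral_weight_sq]
    rw [e] at hb
    have e2 : f t - (sd (prim (prim F)) t h - h ^ 2 * F t) * (12 / h ^ 4)
        = -((sd (prim (prim F)) t h - h ^ 2 * F t - h ^ 4 / 12 * f t) / (h ^ 4 / 12)) := by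
      field_simp
      ring
    rw [e2, abs_neg, abs_div, abs_of_pos (by positivity : 0 < h ^ 4 / 12),
      div_le_iff₀ (by positivity)]
    exact hb
  have b : unorm (fun t => (sd F t h - h ^ 2 * f t) * (12 / h ^ 4)) ≤ 12 / h ^ 2 * W := by
    refine unorm_le fun t => ?_
    rw [abs_mul, abs_of_pos (by positivity : 0 < 12 / h ^ 4)]
    refine (mul_le_mul_of_nonneg_right (hbd t h hh le_rfl) (by positivity)).trans (le_of_eq ?_)
    field_simp
  rw [hd, hs]
  have c := mul_le_mul_of_nonneg_left b (by positivity : 0 ≤ h ^ 2 / 24)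
  have e : h ^ 2 / 24 * (12 / h ^ 2 * W) = W / 2 := by
    field_simp
    ring
  linarith

/-- Corollary 1, first chain: with `h₁ = h/(2√6)`,
`(1/3)·W₂*(f,χ_h²) ≤ (2/3)·K₂(f,h₁) ≤ (1/2)·ω₂(f,2h₁) ≤ 2·K₂(f,h₁) ≤ 3·W₂*(f,χ_h²)`. -/
theorem stmt7 (f : ℝ → ℝ) (hf : Continuous f) (hper : Function.Periodic f 1)
    (h : ℝ) (hh : 0 < h) (h₁ : ℝ) (hh₁ : h₁ = h / (2 * Real.sqrt 6)) :
    (1/3) * W2star f h 2 ≤ (2/3) * K2 f h₁ ∧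
    (2/3) * K2 f h₁ ≤ (1/2) * omega2 f (2 * h₁) ∧
    (1/2) * omega2 f (2 * h₁) ≤ 2 * K2 f h₁ ∧
    2 * K2 f h₁ ≤ 3 * W2star f h 2 := by
  have h6 : 0 < Real.sqrt 6 := Real.sqrt_pos.2 (by norm_num)
  have hs : 0 < h₁ := by rw [hh₁]; positivity
  have hsq : h₁ ^ 2 = h ^ 2 / 24 := by
    rw [hh₁, div_pow, mul_pow, Real.sq_sqrt (by norm_num)]
    norm_num
  have i1 := W2star_le_K2 hf hper h h₁ hh hsq
  have i2 := K2_le_omega2 hf hper h₁ hs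
  have i3 := omega2_le_K2 hf hper h₁ hs
  have i4 := K2_le_W2star hf hper h h₁ hh hsq
  refine ⟨?_, ?_, ?_, ?_⟩ <;> linarith
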